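/- (Theorem 3.) The Φ-depth has the surjection property — for every φ ∈ Φ and every y ∈ ℝ^d there exists z ∈ E with φ(z) = y and D(z | X) = D^d(y | φ(X)) — if and only if for every φ ∈ Φ and every α ∈ [0,1] the image of the level set equals the corresponding d-variate level set: φ(D_α(X)) = {y ∈ ℝ^d : D^d(y | φ(X)) ≥ α}. -/

import Mathlib

section Superlevel

variable {α β γ : Type*} {f : α → β} {u : α → γ} {v : β → γ}

theorem image_superlevel_subset [Preorder γ] (huv : ∀ a, u a ≤ v (f a)) (c : γ) :
    f '' {a | c ≤ u a} ⊆ {b | c ≤ v b} :=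
  Set.image_subset_iff.2 fun a hc => hc.trans (huv a)

theorem forall_exists_preimage_eq_iff_image_superlevel_eq [PartialOrder γ] {S : Set γ}
    (huv : ∀ a, u a ≤ v (f a)) (hvS : ∀ b, v b ∈ S) :
    (∀ b, ∃ a, f a = b ∧ u a = v b) ↔ ∀ c ∈ S, f '' {a | c ≤ u a} = {b | c ≤ v b} := by
  constructor
  · intro hlift c _
    refine (image_superlevel_subset huv c).antisymm fun b hc => ?_
    obtain ⟨a, rfl, hua⟩ := hlift b
    exact ⟨a, hc.trans_eq hua.symm, rfl⟩
  · intro himage b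
    -- The level `v b` itself forces equality: a preimage `a` has `v b ≤ u a ≤ v (f a) = v b`.
    have hb : b ∈ f '' {a | v b ≤ u a} := (himage (v b) (hvS b)).ge le_rfl
    obtain ⟨a, hle, rfl⟩ := hb
    exact ⟨a, rfl, (huv a).antisymm hle⟩

end Superlevel

section PhiDepth

variable {E F ι H L : Type*} [FunLike H E F]

/-- The `Φ`-depth of the point `z` in the data cloud `X`: the infimum over `φ ∈ Φ` of the depth
`Dd` of `φ z` in the projected cloud `φ ∘ X`. The projections may be any bundled maps, and depth
values lie in any type with an infimum operation. -/
def phiDepth [InfSet L] (Dd : F → (ι → F) → L) (Φ : Set H) (z : E) (X : ι → E) : L :=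
  sInf {v | ∃ φ ∈ Φ, v = Dd (φ z) (fun i => φ (X i))}

variable [ConditionallyCompleteLattice L] {Dd : F → (ι → F) → L} {Φ : Set H} {S : Set L}

theorem phiDepth_le (hS : BddBelow S) (hDd : ∀ y Y, Dd y Y ∈ S) {φ : H} (hφ : φ ∈ Φ)
    (z : E) (X : ι → E) : phiDepth Dd Φ z X ≤ Dd (φ z) (fun i => φ (X i)) := by
  have hbdd : BddBelow {v | ∃ ψ ∈ Φ, v = Dd (ψ z) (fun i => ψ (X i))} := by
    refine hS.mono ?_
    rintro _ ⟨ψ, _, rfl⟩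
    exact hDd _ _
  exact csInf_le hbdd ⟨φ, hφ, rfl⟩

theorem phi_depth_surjection_property_general (hS : BddBelow S) (hDd : ∀ y Y, Dd y Y ∈ S)
    (X : ι → E) :
    (∀ φ ∈ Φ, ∀ y, ∃ z, φ z = y ∧ phiDepth Dd Φ z X = Dd y (fun i => φ (X i))) ↔
      ∀ φ ∈ Φ, ∀ α ∈ S,
        ⇑φ '' {z | α ≤ phiDepth Dd Φ z X} = {y | α ≤ Dd y (fun i => φ (X i))} :=
  forall₂_congr fun _ hφ =>
    forall_exists_preimage_eq_iff_image_superlevel_eq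
      (fun z => phiDepth_le hS hDd hφ z X) (fun y => hDd y _)

end PhiDepth

/-- Theorem 3: the surjection property holds if and only if images of level sets
coincide with the d-variate level sets of the projected data. -/
theorem phi_depth_surjection_property
    {E : Type*} [NormedAddCommGroup E] [NormedSpace ℝ E]
    {n d : ℕ} (hn : 0 < n) (hd : 0 < d)
    (Dd : (Fin d → ℝ) → (Fin n → (Fin d → ℝ)) → ℝ)
    (hDd01 : ∀ y Y, Dd y Y ∈ Set.Icc (0 : ℝ) 1)
    (Φ : Set (E →L[ℝ] (Fin d → ℝ))) (hΦ : Φ.Nonempty)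
    (D : E → (Fin n → E) → ℝ)
    (hD : ∀ z X, D z X = sInf {v : ℝ | ∃ φ ∈ Φ, v = Dd (φ z) (fun i => φ (X i))})
    (X : Fin n → E) :
    (∀ φ ∈ Φ, ∀ y : Fin d → ℝ,
        ∃ z : E, φ z = y ∧ D z X = Dd y (fun i => φ (X i))) ↔
      (∀ φ ∈ Φ, ∀ α ∈ Set.Icc (0 : ℝ) 1,
        ⇑φ '' {z : E | α ≤ D z X} =
          {y : Fin d → ℝ | α ≤ Dd y (fun i => φ (X i))}) := by
  obtain rfl : D = phiDepth Dd Φ := funext₂ hD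
  exact phi_depth_surjection_property_general bddBelow_Icc hDd01 X
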